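/- Fix α > 0 and for each d set m_d = ⌈αd⌉. If the sample columns x^(1),…,x^(m_d) are i.i.d. N(0, I_d), then liminf_{d→∞} R_{m_d}(F_sign) ≥ erf(1/√(2α)), where erf is the Gauss error function. (The lower bound is obtained by evaluating the supremum at the Hebb estimator w* = (1/√d) Σ_ν ε_ν x^(ν).) -/

import Mathlib

/-!
The supremum over the class is bounded below by its value at the Hebb weights `w = ∑ ν, ε ν x^(ν)`.
By Fubini the signs `ε` can be frozen. For a fixed index `μ` and given `x^(μ) = x`, the quantity
`ε μ ⟨w, x⟩` equals `‖x‖² + G`, where `G` is a linear functional of the remaining `n = m - 1` Gaussian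
columns and hence `G ~ N(0, n ‖x‖²)` (`map_linear_gaussian`). Therefore the conditional mean of
`ε μ sign ⟨w, x⟩` is at least `P(|G| < ‖x‖²) = erf (√(‖x‖² / (2n)))` (`integral_hebbTerm_cond`).

By Chebyshev's inequality `‖x‖² ≥ (1 - δ) d` outside an event of probability `O(1/(δ² d))`
(`norm_tail`), and `n < α d`, so `R_m ≥ erf (√((1 - δ)/(2α))) - O(1/(δ² d))` (`popRad_lower`). Letting
`d → ∞` and then `δ → 0` gives the bound.

The comparison of Bochner integrals requires the supremum over the uncountable class to be jointly
measurable in the sample and the signs. This holds because the set of samples realizing a given sign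
pattern is `σ`-compact (`measurableSet_pattern`, `measurable_iSup_correlation`).
-/

open MeasureTheory ProbabilityTheory Filter Finset

/-- The Rademacher (uniform ±1) distribution on `ℝ`. -/
noncomputable def radMeasure : Measure ℝ :=
  ((PMF.bernoulli 2⁻¹ (by norm_num)).map (fun b => if b then (1 : ℝ) else -1)).toMeasure

instance : IsProbabilityMeasure radMeasure :=
  PMF.toMeasure.isProbabilityMeasure _

/-- The standard Gaussian measure `N(0, I_d)` on `Fin d → ℝ`. -/
noncomputable def stdGaussian (d : ℕ) : Measure (Fin d → ℝ) :=
  Measure.pi fun _ => gaussianReal 0 1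

/-- The sign function with the convention `sgn 0 = 1`. -/
noncomputable def sgn (t : ℝ) : ℝ := if 0 ≤ t then 1 else -1

/-- The perceptron hypothesis class
`F_sign = { x ↦ sign((1/√d) wᵀx) : w ∈ ℝ^d }`. -/
noncomputable def signClass (d : ℕ) : Set ((Fin d → ℝ) → ℝ) :=
  {f | ∃ w : Fin d → ℝ, f = fun x => sgn ((Real.sqrt d)⁻¹ * ∑ i, w i * x i)}

/-- Empirical Rademacher complexity of a class `F` at the sample `X`. -/
noncomputable def empRad {d m : ℕ} (F : Set ((Fin d → ℝ) → ℝ))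
    (X : Fin m → Fin d → ℝ) : ℝ :=
  ∫ ε : Fin m → ℝ, (⨆ f : F, (m : ℝ)⁻¹ * ∑ μ, ε μ * f.1 (X μ))
    ∂(Measure.pi fun _ => radMeasure)

/-- Population Rademacher complexity of a class `F`, with the sample drawn from `μX`. -/
noncomputable def popRad {d m : ℕ} (F : Set ((Fin d → ℝ) → ℝ))
    (μX : Measure (Fin m → Fin d → ℝ)) : ℝ :=
  ∫ X, empRad F X ∂μX

/-- The Gauss error function `erf(x) = (2/√π) ∫₀ˣ e^{-t²} dt`. -/
noncomputable def erf (x : ℝ) : ℝ :=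
  (2 / Real.sqrt Real.pi) * ∫ t in (0 : ℝ)..x, Real.exp (-t ^ 2)

/-! ### The error function and the Gaussian distribution -/

lemma expNegSq_intervalIntegrable (a b : ℝ) :
    IntervalIntegrable (fun t : ℝ => Real.exp (-t ^ 2)) volume a b :=
  Continuous.intervalIntegrable (by fun_prop) a b

lemma continuous_erf : Continuous erf := by
  unfold erf
  exact continuous_const.mul
    (intervalIntegral.continuous_primitive expNegSq_intervalIntegrable 0)

lemma erf_mono : Monotone erf := by
  intro a b hab
  unfold erf
  refine mul_le_mul_of_nonneg_left ?_ (by positivity)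
  rw [← sub_nonneg, intervalIntegral.integral_interval_sub_left
    (expNegSq_intervalIntegrable _ _) (expNegSq_intervalIntegrable _ _)]
  exact intervalIntegral.integral_nonneg hab fun t _ => (Real.exp_pos _).le

lemma gaussianReal_real_Ioo (v : NNReal) (hv : v ≠ 0) (a : ℝ) (ha : 0 ≤ a) :
    (gaussianReal 0 v).real (Set.Ioo (-a) a) = erf (a / Real.sqrt (2 * v)) := by
  have hv' : (0 : ℝ) < v := by positivity
  have hc : Real.sqrt (2 * v) ≠ 0 := by positivity
  rw [measureReal_def, gaussianReal_apply_eq_integral _ hv, ENNReal.toReal_ofReal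
    (setIntegral_nonneg measurableSet_Ioo fun x _ => gaussianPDFReal_nonneg _ _ _),
    ← integral_Ioc_eq_integral_Ioo, ← intervalIntegral.integral_of_le (by linarith)]
  have h1 : ∀ x, gaussianPDFReal 0 v x =
      (Real.sqrt (2 * Real.pi * v))⁻¹ *
        (fun t : ℝ => Real.exp (-t ^ 2)) (x / Real.sqrt (2 * v)) := by
    intro x
    simp only [gaussianPDFReal_def, sub_zero, div_pow]
    rw [Real.sq_sqrt (by positivity), neg_div]
  simp_rw [h1]
  rw [intervalIntegral.integral_const_mul,
    intervalIntegral.integral_comp_div (fun t : ℝ => Real.exp (-t ^ 2)) hc]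
  set b := a / Real.sqrt (2 * v)
  have h2 : (∫ t in (-a / Real.sqrt (2 * v))..b, Real.exp (-t ^ 2))
      = 2 * ∫ t in (0 : ℝ)..b, Real.exp (-t ^ 2) := by
    have h3 := intervalIntegral.integral_comp_neg (a := 0) (b := b)
      (fun t : ℝ => Real.exp (-t ^ 2))
    simp only [neg_sq, neg_zero] at h3
    rw [neg_div, ← intervalIntegral.integral_add_adjacent_intervals
      (expNegSq_intervalIntegrable _ 0) (expNegSq_intervalIntegrable 0 _), ← h3]
    ring
  rw [h2, erf]
  have h4 : Real.sqrt (2 * Real.pi * v) = Real.sqrt Real.pi * Real.sqrt (2 * v) := by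
    rw [← Real.sqrt_mul Real.pi_pos.le]; congr 1; ring
  rw [h4, smul_eq_mul]
  have : Real.sqrt Real.pi ≠ 0 := by positivity
  field_simp

lemma erf_nonneg {b : ℝ} (hb : 0 ≤ b) : 0 ≤ erf b := by
  have := erf_mono hb
  simpa [erf] using this

lemma erf_le_one {b : ℝ} (hb : 0 ≤ b) : erf b ≤ 1 := by
  have h := gaussianReal_real_Ioo 1 one_ne_zero (b * Real.sqrt 2) (by positivity)
  have h2 : Real.sqrt 2 ≠ 0 := by positivity
  simp only [NNReal.coe_one, mul_one] at h
  rw [mul_div_cancel_right₀ _ h2] at h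
  rw [← h]
  exact measureReal_le_one

/-! ### Signs of shifted Gaussians -/

/-- The strict variant of the sign, with value `-1` at `0`. -/
noncomputable def sgnStrict (t : ℝ) : ℝ := if 0 < t then 1 else -1

lemma measurable_sgn : Measurable sgn :=
  Measurable.ite measurableSet_Ici measurable_const measurable_const

lemma measurable_sgnStrict : Measurable sgnStrict :=
  Measurable.ite measurableSet_Ioi measurable_const measurable_const

lemma abs_sgn (t : ℝ) : |sgn t| = 1 := by
  unfold sgn; split_ifs <;> simp

lemma abs_sgnStrict (t : ℝ) : |sgnStrict t| = 1 := by
  unfold sgnStrict; split_ifs <;> simp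

/-- Up to the tie-breaking convention at `0`, multiplying by a sign commutes with `sgn`; the
positive factor `c` stands for the normalization `1/√d`. -/
lemma sgnStrict_le_mul_sgn {e c T : ℝ} (he : e = 1 ∨ e = -1) (hc : 0 < c) :
    sgnStrict (e * T) ≤ e * sgn (c * T) := by
  have h : 0 ≤ c * T ↔ 0 ≤ T := mul_nonneg_iff_of_pos_left hc
  unfold sgnStrict sgn
  rcases he with rfl | rfl <;> simp only [h] <;> split_ifs <;> linarith

/-- Symmetrizing in `g ↦ -g` turns `sgnStrict (a + g)` into the indicator of `|g| < a`. -/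
lemma integral_sgnStrict_add (v : NNReal) (hv : v ≠ 0) (a : ℝ) (ha : 0 < a) :
    ∫ g, sgnStrict (a + g) ∂(gaussianReal 0 v) = erf (a / Real.sqrt (2 * v)) := by
  rw [← gaussianReal_real_Ioo v hv a ha.le]
  have h_integrable : ∀ f : ℝ → ℝ, Measurable f →
      Integrable (fun g => sgnStrict (f g)) (gaussianReal 0 v) := fun f hf =>
    Integrable.of_bound (measurable_sgnStrict.comp hf).aestronglyMeasurable 1
      (ae_of_all _ fun g => (abs_sgnStrict _).le)
  have h1 : ∫ g, sgnStrict (a + g) ∂(gaussianReal 0 v)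
      = ∫ g, sgnStrict (a - g) ∂(gaussianReal 0 v) := by
    have : gaussianReal 0 v = (gaussianReal 0 v).map (fun x => -x) := by
      rw [gaussianReal_map_neg, neg_zero]
    conv_lhs => rw [this]
    have hm : Measurable fun g => sgnStrict (a + g) := measurable_sgnStrict.comp (by fun_prop)
    rw [integral_map (by fun_prop) hm.aestronglyMeasurable]
    rfl
  have h2 : ∫ g, (sgnStrict (a + g) + sgnStrict (a - g)) ∂(gaussianReal 0 v)
      = 2 * (gaussianReal 0 v).real (Set.Ioo (-a) a) := by
    rw [← integral_indicator_one measurableSet_Ioo, ← integral_const_mul]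
    congr 1
    ext g
    simp only [sgnStrict, Set.indicator_apply, Set.mem_Ioo, Pi.one_apply]
    split_ifs <;> grind
  rw [integral_add (h_integrable _ (by fun_prop)) (h_integrable _ (by fun_prop)), ← h1] at h2
  linarith

instance isProbabilityMeasure_stdGaussian (d : ℕ) : IsProbabilityMeasure (stdGaussian d) := by
  unfold _root_.stdGaussian; infer_instance

/-- A linear functional of independent standard Gaussians is a centred Gaussian whose variance is the
sum of the squared coefficients. Proved by comparing characteristic functions. -/
lemma map_linear_gaussian {n d : ℕ} (c : Fin n → Fin d → ℝ) :
    (Measure.pi fun _ : Fin n => stdGaussian d).map (fun Y => ∑ ν, ∑ i, c ν i * Y ν i)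
      = gaussianReal 0 (∑ ν, ∑ i, (c ν i) ^ 2).toNNReal := by
  have hm : Measurable (fun Y : Fin n → Fin d → ℝ => ∑ ν, ∑ i, c ν i * Y ν i) := by fun_prop
  have := Measure.isProbabilityMeasure_map (μ := Measure.pi fun _ : Fin n => stdGaussian d)
    hm.aemeasurable
  apply Measure.ext_of_charFun
  ext t
  rw [charFun_gaussianReal, charFun_apply_real, integral_map hm.aemeasurable (by fun_prop)]
  have h1 : ∀ Y : Fin n → Fin d → ℝ,
      Complex.exp (t * ((∑ ν, ∑ i, c ν i * Y ν i : ℝ) : ℂ) * Complex.I)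
        = ∏ ν, ∏ i, Complex.exp (((t * c ν i : ℝ) : ℂ) * (Y ν i : ℂ) * Complex.I) := by
    intro Y
    simp_rw [← Complex.exp_sum]
    congr 1
    push_cast
    simp_rw [Finset.mul_sum, Finset.sum_mul, mul_assoc]
  simp_rw [h1]
  rw [integral_fintype_prod_eq_prod (μ := fun _ : Fin n => stdGaussian d)
    (fun ν (y : Fin d → ℝ) =>
    ∏ i, Complex.exp (((t * c ν i : ℝ) : ℂ) * (y i : ℂ) * Complex.I))]
  have h2 : ∀ ν, ∫ y, ∏ i, Complex.exp (((t * c ν i : ℝ) : ℂ) * (y i : ℂ) * Complex.I)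
      ∂(stdGaussian d) = ∏ i, Complex.exp (-(((t * c ν i) ^ 2 / 2 : ℝ) : ℂ)) := by
    intro ν
    unfold _root_.stdGaussian
    rw [integral_fintype_prod_eq_prod (μ := fun _ : Fin d => gaussianReal 0 1)
      (fun i (y : ℝ) =>
      Complex.exp (((t * c ν i : ℝ) : ℂ) * (y : ℂ) * Complex.I))]
    refine Finset.prod_congr rfl fun i _ => ?_
    rw [← charFun_apply_real, charFun_gaussianReal]
    congr 1
    push_cast
    ring
  simp_rw [h2, ← Complex.exp_sum]
  rw [Real.coe_toNNReal _ (by positivity)]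
  congr 1
  push_cast
  simp only [mul_zero, zero_mul, zero_sub]
  simp_rw [Finset.sum_neg_distrib, mul_pow, mul_div_assoc, ← Finset.mul_sum, ← Finset.sum_div]
  ring

/-! ### Rademacher signs -/

lemma ae_radMeasure : ∀ᵐ e ∂radMeasure, e = 1 ∨ e = -1 := by
  unfold radMeasure
  rw [ae_iff, PMF.toMeasure_apply_eq_zero_iff, Set.disjoint_left]
  · intro e he
    rw [PMF.mem_support_map_iff] at he
    obtain ⟨b, -, rfl⟩ := he
    cases b <;> simp
  · exact (by measurability : MeasurableSet {e : ℝ | e = 1 ∨ e = -1}).compl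

lemma ae_pi_radMeasure (m : ℕ) :
    ∀ᵐ ε ∂(Measure.pi fun _ : Fin m => radMeasure), ∀ μ, ε μ = 1 ∨ ε μ = -1 := by
  rw [ae_all_iff]
  intro μ
  exact (Measure.quasiMeasurePreserving_eval (fun _ : Fin m => radMeasure) μ).ae ae_radMeasure

/-! ### Concentration of the squared norm -/

/-- Chebyshev bound for the lower tail of `‖x‖²`, which has mean `d` and variance `C d`. -/
lemma norm_tail : ∃ C : ℝ, 0 ≤ C ∧ ∀ (d : ℕ) (δ : ℝ), 0 < d → 0 < δ →
    (stdGaussian d).real {x | ∑ i, x i ^ 2 < (1 - δ) * d} ≤ C / (δ ^ 2 * d) := by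
  have hL : MemLp (fun x : ℝ => x ^ 2) 2 (gaussianReal 0 1) := by
    have h := memLp_id_gaussianReal (μ := 0) (v := 1) 4
    have h2 := (h.norm_rpow_div 2)
    have h3 : ((4 : NNReal) : ENNReal) / 2 = 2 := by
      
      rw [show ((4 : NNReal) : ENNReal) = 2 * 2 by norm_num,
        ENNReal.mul_div_cancel_right (by simp) (by simp)]
    rw [h3] at h2
    simpa using h2
  have hI : ∫ x, x ^ 2 ∂(gaussianReal 0 1) = 1 := by
    have h := variance_fun_id_gaussianReal (μ := 0) (v := 1)
    rw [variance_of_integral_eq_zero (by fun_prop) (by simp)] at h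
    simpa using h
  refine ⟨Var[fun x : ℝ => x ^ 2; gaussianReal 0 1], variance_nonneg _ _, fun d δ hd hδ => ?_⟩
  have hd' : (0 : ℝ) < d := by exact_mod_cast hd
  set S : (Fin d → ℝ) → ℝ := ∑ i, fun x => x i ^ 2 with hS
  have hSx : ∀ x, S x = ∑ i, x i ^ 2 := fun x => by simp [hS]
  have hLi : ∀ i : Fin d, MemLp (fun x : Fin d → ℝ => x i ^ 2) 2 (stdGaussian d) := fun i =>
    hL.comp_measurePreserving (measurePreserving_eval (fun _ : Fin d => gaussianReal 0 1) i)
  have hSL : MemLp S 2 (stdGaussian d) := memLp_finsetSum' _ fun i _ => hLi i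
  have hvar : Var[S; stdGaussian d] = d * Var[fun x : ℝ => x ^ 2; gaussianReal 0 1] := by
    have := variance_sum_pi (μ := fun _ : Fin d => gaussianReal 0 1)
      (X := fun _ x => x ^ 2) (fun _ => hL)
    simpa [_root_.stdGaussian, hS] using this
  have hmean : ∫ x, S x ∂(stdGaussian d) = d := by
    simp_rw [hSx]
    rw [integral_finsetSum _ fun i _ => (hLi i).integrable (by norm_num)]
    have : ∀ i : Fin d, ∫ x, x i ^ 2 ∂(stdGaussian d) = 1 := fun i => by
      rw [← hI, ← (measurePreserving_eval (fun _ : Fin d => gaussianReal 0 1) i).map_eq,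
        integral_map (measurable_pi_apply i).aemeasurable (by fun_prop)]
      rfl
    simp [this]
  have hcheb := meas_ge_le_variance_div_sq hSL (c := δ * d) (by positivity)
  rw [hmean, hvar] at hcheb
  have hsub : {x : Fin d → ℝ | ∑ i, x i ^ 2 < (1 - δ) * d} ⊆ {x | δ * d ≤ |S x - d|} := by
    intro x hx
    simp only [Set.mem_ofPred_eq] at hx ⊢
    rw [hSx, abs_sub_comm]
    refine le_trans ?_ (le_abs_self _)
    linarith
  have h1 := (measure_mono hsub).trans hcheb
  rw [measureReal_def]
  refine ENNReal.toReal_le_of_le_ofReal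
    (div_nonneg (variance_nonneg _ _) (by positivity)) (h1.trans_eq ?_)
  congr 1
  field_simp

/-! ### Measurability and integrability of the supremum -/

/-- The set of samples on which a given sign pattern `s` is realized by some linear classifier is
measurable: it is the projection along `w` of a countable union of closed subsets of a
finite-dimensional space, hence `σ`-compact. -/
lemma measurableSet_pattern {d m : ℕ} (s : Fin m → Bool) :
    MeasurableSet {X : Fin m → Fin d → ℝ | ∃ w : Fin d → ℝ, ∀ μ,
      sgn ((Real.sqrt d)⁻¹ * ∑ i, w i * X μ i) = if s μ then 1 else -1} := by
  set T : (Fin m → Fin d → ℝ) × (Fin d → ℝ) → Fin m → ℝ :=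
    fun p μ => (Real.sqrt d)⁻¹ * ∑ i, p.2 i * p.1 μ i with hT
  have hTc : ∀ μ, Continuous fun p => T p μ := fun μ => by simp only [hT]; fun_prop
  let K : ℕ → Set ((Fin m → Fin d → ℝ) × (Fin d → ℝ)) := fun k =>
    {p | ∀ μ, if s μ then 0 ≤ T p μ else T p μ ≤ -(1 / ((k : ℝ) + 1))}
  have hK : ∀ k, IsClosed (K k) := by
    intro k
    simp only [K, Set.ofPred_forall]
    refine isClosed_iInter fun μ => ?_
    cases s μ
    · simpa using isClosed_le (hTc μ) continuous_const
    · simpa using isClosed_le continuous_const (hTc μ)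
  have hKm : ∀ k, MeasurableSet (Prod.fst '' K k) := by
    intro k
    obtain ⟨L, hL, hLK⟩ := (isSigmaCompact_univ.of_isClosed_subset (hK k)
      (Set.subset_univ _)).image continuous_fst
    rw [← hLK]
    exact MeasurableSet.iUnion fun j => (hL j).isClosed.measurableSet
  convert! MeasurableSet.iUnion hKm using 1
  ext X
  simp only [Set.mem_ofPred_eq, Set.mem_iUnion, Set.mem_image, Prod.exists, exists_and_right,
    exists_eq_right]
  constructor
  · rintro ⟨w, hw⟩
    have h1 : ∀ μ, ∃ k : ℕ, s μ = false → T (X, w) μ < -(1 / ((k : ℝ) + 1)) := by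
      intro μ
      by_cases h : s μ = false
      · have h2 := hw μ
        have h3 : T (X, w) μ < 0 := by
          by_contra! h3
          rw [sgn, if_pos h3] at h2
          simp [h] at h2
          norm_num at h2
        obtain ⟨k, hk⟩ := exists_nat_one_div_lt (neg_pos.2 h3)
        exact ⟨k, fun _ => by linarith⟩
      · exact ⟨0, fun h' => absurd h' h⟩
    choose k hk using h1
    -- The sum dominates every `k μ`, so it serves as a common margin index.
    refine ⟨∑ μ, k μ, w, fun μ => ?_⟩
    cases h : s μ
    · simp only [Bool.false_eq_true, if_false]
      refine (hk μ h).le.trans (neg_le_neg ?_)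
      have : k μ ≤ ∑ μ, k μ := Finset.single_le_sum (fun _ _ => Nat.zero_le _) (mem_univ μ)
      have : (k μ : ℝ) ≤ ((∑ μ, k μ : ℕ) : ℝ) := by exact_mod_cast this
      gcongr
    · simp only [if_true]
      have h2 := hw μ
      by_contra h3
      rw [sgn, if_neg h3] at h2
      simp [h] at h2
      norm_num at h2
  · rintro ⟨k, w, hw⟩
    refine ⟨w, fun μ => ?_⟩
    have h2 := hw μ
    cases h : s μ
    · simp only [h, Bool.false_eq_true, if_false] at h2 ⊢
      have : T (X, w) μ < 0 := h2.trans_lt (by rw [neg_lt_zero]; positivity)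
      exact if_neg (not_le.2 this)
    · simp only [h, if_true] at h2 ⊢
      exact if_pos h2

lemma abs_of_mem_signClass {d : ℕ} (f : signClass d) (x : Fin d → ℝ) : |f.1 x| = 1 := by
  obtain ⟨w, hw⟩ := f.2
  rw [hw]
  exact abs_sgn _

lemma correlation_le {m d : ℕ} (X : Fin m → Fin d → ℝ) (ε : Fin m → ℝ) (f : signClass d) :
    |(m : ℝ)⁻¹ * ∑ μ, ε μ * f.1 (X μ)| ≤ (m : ℝ)⁻¹ * ∑ μ, |ε μ| := by
  rw [abs_mul, abs_of_nonneg (by positivity : (0 : ℝ) ≤ (m : ℝ)⁻¹)]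
  gcongr
  refine (Finset.abs_sum_le_sum_abs _ _).trans_eq (Finset.sum_congr rfl fun μ _ => ?_)
  rw [abs_mul, abs_of_mem_signClass, mul_one]

lemma bddAbove_correlation {m d : ℕ} (X : Fin m → Fin d → ℝ) (ε : Fin m → ℝ) :
    BddAbove (Set.range fun f : signClass d => (m : ℝ)⁻¹ * ∑ μ, ε μ * f.1 (X μ)) := by
  refine ⟨(m : ℝ)⁻¹ * ∑ μ, |ε μ|, ?_⟩
  rintro _ ⟨f, rfl⟩
  exact (abs_le.1 (correlation_le X ε f)).2

instance nonempty_signClass (d : ℕ) : Nonempty (signClass d) := ⟨⟨_, 0, rfl⟩⟩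

/-- Joint measurability of the supremum over the (uncountable) class: the supremum exceeds `c` iff one
of the finitely many sign patterns both correlates with `ε` above `c` and is realized on the sample. -/
lemma measurable_iSup_correlation (m d : ℕ) :
    Measurable fun p : (Fin m → Fin d → ℝ) × (Fin m → ℝ) =>
      ⨆ f : signClass d, (m : ℝ)⁻¹ * ∑ μ, p.2 μ * f.1 (p.1 μ) := by
  refine measurable_of_Ioi fun c => ?_
  have h : (fun p : (Fin m → Fin d → ℝ) × (Fin m → ℝ) =>
      ⨆ f : signClass d, (m : ℝ)⁻¹ * ∑ μ, p.2 μ * f.1 (p.1 μ)) ⁻¹' Set.Ioi c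
      = ⋃ s : Fin m → Bool,
        (Prod.fst ⁻¹' {X : Fin m → Fin d → ℝ | ∃ w : Fin d → ℝ, ∀ μ,
          sgn ((Real.sqrt d)⁻¹ * ∑ i, w i * X μ i) = if s μ then 1 else -1}) ∩
        {p : (Fin m → Fin d → ℝ) × (Fin m → ℝ) |
          c < (m : ℝ)⁻¹ * ∑ μ, p.2 μ * (if s μ then 1 else -1)} := by
    ext p
    simp only [Set.mem_preimage, Set.mem_Ioi, Set.mem_iUnion, Set.mem_inter_iff,
      Set.mem_ofPred_eq]
    rw [lt_ciSup_iff (bddAbove_correlation p.1 p.2)]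
    constructor
    · rintro ⟨⟨f, w, rfl⟩, hf⟩
      have hs : ∀ μ, sgn ((Real.sqrt d)⁻¹ * ∑ i, w i * p.1 μ i)
          = if decide (0 ≤ (Real.sqrt d)⁻¹ * ∑ i, w i * p.1 μ i) then 1 else -1 := by
        intro μ; simp [sgn]
      refine ⟨fun μ => decide (0 ≤ (Real.sqrt d)⁻¹ * ∑ i, w i * p.1 μ i), ⟨w, hs⟩, ?_⟩
      simpa only [hs] using hf
    · rintro ⟨s, ⟨w, hw⟩, hs⟩
      refine ⟨⟨_, w, rfl⟩, ?_⟩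
      simpa only [hw] using hs
  rw [h]
  refine MeasurableSet.iUnion fun s => ?_
  refine (measurable_fst (measurableSet_pattern s)).inter ?_
  exact measurableSet_lt measurable_const (by fun_prop)

lemma abs_iSup_correlation_le {m d : ℕ} (X : Fin m → Fin d → ℝ) (ε : Fin m → ℝ)
    (hε : ∀ μ, ε μ = 1 ∨ ε μ = -1) :
    |⨆ f : signClass d, (m : ℝ)⁻¹ * ∑ μ, ε μ * f.1 (X μ)| ≤ 1 := by
  have hsum : (m : ℝ)⁻¹ * ∑ μ, |ε μ| ≤ 1 := by
    have : ∀ μ, |ε μ| = 1 := fun μ => by rcases hε μ with h | h <;> simp [h]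
    simp only [this, sum_const, card_univ, Fintype.card_fin, nsmul_eq_mul, mul_one]
    exact inv_mul_le_one
  have hb : ∀ f : signClass d, |(m : ℝ)⁻¹ * ∑ μ, ε μ * f.1 (X μ)| ≤ 1 :=
    fun f => (correlation_le X ε f).trans hsum
  refine abs_le.2 ⟨?_, ciSup_le fun f => (abs_le.1 (hb f)).2⟩
  obtain ⟨f⟩ := nonempty_signClass d
  exact (abs_le.1 (hb f)).1.trans (le_ciSup (bddAbove_correlation X ε) f)

lemma ae_prod_signs {m d : ℕ} :
    ∀ᵐ p ∂((Measure.pi fun _ : Fin m => stdGaussian d).prod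
      (Measure.pi fun _ : Fin m => radMeasure)), ∀ μ, p.2 μ = 1 ∨ p.2 μ = -1 :=
  Measure.quasiMeasurePreserving_snd.ae (ae_pi_radMeasure m)

lemma integrable_iSup_correlation (m d : ℕ) :
    Integrable (fun p : (Fin m → Fin d → ℝ) × (Fin m → ℝ) =>
      ⨆ f : signClass d, (m : ℝ)⁻¹ * ∑ μ, p.2 μ * f.1 (p.1 μ))
      ((Measure.pi fun _ : Fin m => stdGaussian d).prod
        (Measure.pi fun _ : Fin m => radMeasure)) :=
  Integrable.of_bound (measurable_iSup_correlation m d).aestronglyMeasurable 1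
    (ae_prod_signs.mono fun p hp => abs_iSup_correlation_le p.1 p.2 hp)

lemma popRad_signClass_eq (m d : ℕ) :
    popRad (signClass d) (Measure.pi fun _ : Fin m => stdGaussian d)
      = ∫ p : (Fin m → Fin d → ℝ) × (Fin m → ℝ),
        (⨆ f : signClass d, (m : ℝ)⁻¹ * ∑ μ, p.2 μ * f.1 (p.1 μ))
        ∂((Measure.pi fun _ : Fin m => stdGaussian d).prod
          (Measure.pi fun _ : Fin m => radMeasure)) := by
  rw [integral_prod _ (integrable_iSup_correlation m d)]
  rfl

lemma popRad_signClass_le_one (m d : ℕ) :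
    popRad (signClass d) (Measure.pi fun _ : Fin m => stdGaussian d) ≤ 1 := by
  rw [popRad_signClass_eq]
  refine (integral_mono_ae (integrable_iSup_correlation m d) (integrable_const 1)
    (ae_prod_signs.mono fun p hp => (abs_le.1 (abs_iSup_correlation_le p.1 p.2 hp)).2)).trans_eq ?_
  simp

/-! ### The Hebb estimator -/

/-- The contribution `ε_μ f(x^(μ))` of the `μ`-th sample point when `f` is the classifier with weights
`∑ ν, ε ν x^(ν)`. The Hebb estimator differs only by the positive factor `1/√d`, which does not
affect signs. -/
noncomputable def hebbTerm {m d : ℕ} (ε : Fin m → ℝ) (X : Fin m → Fin d → ℝ) (μ : Fin m) : ℝ :=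
  ε μ * sgn ((Real.sqrt d)⁻¹ * ∑ i, (∑ ν, ε ν * X ν i) * X μ i)

lemma measurable_hebbTerm {m d : ℕ} (μ : Fin m) :
    Measurable fun p : (Fin m → Fin d → ℝ) × (Fin m → ℝ) => hebbTerm p.2 p.1 μ := by
  unfold hebbTerm
  exact (by fun_prop : Measurable fun p : (Fin m → Fin d → ℝ) × (Fin m → ℝ) => p.2 μ).mul
    (measurable_sgn.comp (by fun_prop))

lemma abs_hebbTerm {m d : ℕ} (ε : Fin m → ℝ) (hε : ∀ μ, ε μ = 1 ∨ ε μ = -1)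
    (X : Fin m → Fin d → ℝ) (μ : Fin m) : |hebbTerm ε X μ| = 1 := by
  rw [hebbTerm, abs_mul, abs_sgn, mul_one]
  rcases hε μ with h | h <;> simp [h]

/-- Conditionally on `X μ = x`, the argument of the sign times `ε μ` is `‖x‖² + G` with
`G ~ N(0, n ‖x‖²)`, so that the conditional mean of the Hebb term is at least `P(|G| < ‖x‖²)`. The
other `n` sample points are integrated out here. -/
lemma integral_hebbTerm_cond {n d : ℕ} (hn : 0 < n) (hd : 0 < d) (ε : Fin (n + 1) → ℝ)
    (hε : ∀ μ, ε μ = 1 ∨ ε μ = -1) (μ : Fin (n + 1)) (x : Fin d → ℝ)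
    (ha : 0 < ∑ i, x i ^ 2) :
    erf (Real.sqrt ((∑ i, x i ^ 2) / (2 * n))) ≤
      ∫ Y : Fin n → Fin d → ℝ, hebbTerm ε (μ.insertNth x Y) μ
        ∂(Measure.pi fun _ : Fin n => stdGaussian d) := by
  set a := ∑ i, x i ^ 2 with ha_def
  set c : Fin n → Fin d → ℝ := fun ν i => ε μ * ε (μ.succAbove ν) * x i with hc
  have hsq : ∀ ν, ε ν ^ 2 = 1 := fun ν => by rcases hε ν with h | h <;> simp [h]
  have hv : ∑ ν, ∑ i, (c ν i) ^ 2 = n * a := by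
    simp [hc, mul_pow, hsq, ha_def]
  have hn' : (0 : ℝ) < n := by exact_mod_cast hn
  have hv0 : (∑ ν, ∑ i, (c ν i) ^ 2).toNNReal ≠ 0 := by
    rw [hv]
    simpa using by positivity
  have hsgn : Measurable fun g => sgnStrict (a + g) := measurable_sgnStrict.comp (by fun_prop)
  have hlin : Measurable fun Y : Fin n → Fin d → ℝ => ∑ ν, ∑ i, c ν i * Y ν i := by fun_prop
  have h1 := integral_sgnStrict_add _ hv0 a ha
  rw [← map_linear_gaussian, integral_map hlin.aemeasurable hsgn.aestronglyMeasurable,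
    hv, Real.coe_toNNReal _ (by positivity)] at h1
  have h2 : a / Real.sqrt (2 * (n * a)) = Real.sqrt (a / (2 * n)) := by
    rw [eq_comm, Real.sqrt_eq_iff_mul_self_eq (by positivity) (by positivity),
      div_mul_div_comm, Real.mul_self_sqrt (by positivity)]
    field_simp
  rw [h2] at h1
  rw [← h1]
  refine integral_mono ?_ ?_ fun Y => ?_
  · exact Integrable.of_bound (hsgn.comp hlin).aestronglyMeasurable 1
      (ae_of_all _ fun Y => (abs_sgnStrict _).le)
  · have hm : Measurable fun Y : Fin n → Fin d → ℝ => hebbTerm ε (μ.insertNth x Y) μ := by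
      refine (measurable_hebbTerm (m := n + 1) (d := d) μ).comp
        (Measurable.prodMk ?_ measurable_const)
      exact (MeasurableEquiv.piFinSuccAbove (fun _ => Fin d → ℝ) μ).symm.measurable.comp
        (measurable_const.prodMk measurable_id)
    exact Integrable.of_bound hm.aestronglyMeasurable 1
      (ae_of_all _ fun Y => (abs_hebbTerm ε hε _ _).le)
  · have h3 : a + ∑ ν, ∑ i, c ν i * Y ν i
        = ε μ * ∑ i, (∑ ν, ε ν * (μ.insertNth x Y : Fin (n + 1) → Fin d → ℝ) ν i) * x i := by
      simp_rw [Fin.sum_univ_succAbove _ μ, Fin.insertNth_apply_same,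
        Fin.insertNth_apply_succAbove, add_mul, Finset.sum_add_distrib, mul_add, Finset.sum_mul,
        Finset.mul_sum]
      congr 1
      · rw [ha_def]
        refine Finset.sum_congr rfl fun i _ => ?_
        linear_combination (- x i ^ 2) * hsq μ
      · rw [Finset.sum_comm]
        refine Finset.sum_congr rfl fun i _ => Finset.sum_congr rfl fun ν _ => ?_
        simp only [hc]; ring
    simp only [hebbTerm, Fin.insertNth_apply_same, h3]
    exact sgnStrict_le_mul_sgn (hε μ) (by positivity)

/-- Averaging the conditional bound over `x`: on `‖x‖² ≥ r` monotonicity of `erf` applies, and on the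
complement the term is at least `-1`, which is at least `erf _ - 2`. -/
lemma integral_hebbTerm {n d : ℕ} (hn : 0 < n) (hd : 0 < d) (ε : Fin (n + 1) → ℝ)
    (hε : ∀ μ, ε μ = 1 ∨ ε μ = -1) (μ : Fin (n + 1)) (r : ℝ) (hr : 0 < r) :
    erf (Real.sqrt (r / (2 * n))) - 2 * (stdGaussian d).real {x | ∑ i, x i ^ 2 < r} ≤
      ∫ X, hebbTerm ε X μ ∂(Measure.pi fun _ : Fin (n + 1) => stdGaussian d) := by
  have hmp := (measurePreserving_piFinSuccAbove (fun _ : Fin (n + 1) => stdGaussian d) μ).symm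
  have hm : Measurable fun X : Fin (n + 1) → Fin d → ℝ => hebbTerm ε X μ :=
    (measurable_hebbTerm μ).comp (measurable_id.prodMk measurable_const)
  have hi : Integrable (fun X : Fin (n + 1) → Fin d → ℝ => hebbTerm ε X μ)
      (Measure.pi fun _ : Fin (n + 1) => stdGaussian d) :=
    Integrable.of_bound hm.aestronglyMeasurable 1
      (ae_of_all _ fun Y => (abs_hebbTerm ε hε _ _).le)
  have hi2 : Integrable (fun p : (Fin d → ℝ) × (Fin n → Fin d → ℝ) =>
      hebbTerm ε ((MeasurableEquiv.piFinSuccAbove (fun _ => Fin d → ℝ) μ).symm p) μ)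
      ((stdGaussian d).prod (Measure.pi fun _ : Fin n => stdGaussian d)) :=
    hmp.integrable_comp_of_integrable hi
  rw [← hmp.integral_comp', integral_prod _ hi2]
  have hK : MeasurableSet {x : Fin d → ℝ | ∑ i, x i ^ 2 < r} :=
    measurableSet_lt (by fun_prop) measurable_const
  have hind : Integrable ({x : Fin d → ℝ | ∑ i, x i ^ 2 < r}.indicator (1 : (Fin d → ℝ) → ℝ))
      (stdGaussian d) := (integrable_const (1 : ℝ)).indicator hK
  have hlow : ∫ x, (erf (Real.sqrt (r / (2 * n)))
      - 2 * ({x : Fin d → ℝ | ∑ i, x i ^ 2 < r}.indicator 1 x)) ∂(stdGaussian d)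
      = erf (Real.sqrt (r / (2 * n))) - 2 * (stdGaussian d).real {x | ∑ i, x i ^ 2 < r} := by
    rw [integral_sub (integrable_const _)
      (hind.const_mul 2), integral_const_mul,
      integral_indicator_one hK]
    simp
  rw [← hlow]
  refine integral_mono ((integrable_const _).sub
    (hind.const_mul 2)) hi2.integral_prod_left fun x => ?_
  change _ ≤ ∫ Y : Fin n → Fin d → ℝ, hebbTerm ε (μ.insertNth x Y) μ
        ∂(Measure.pi fun _ : Fin n => stdGaussian d)
  by_cases hx : ∑ i, x i ^ 2 < r
  · have h1 : |∫ Y : Fin n → Fin d → ℝ, hebbTerm ε (μ.insertNth x Y) μ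
        ∂(Measure.pi fun _ : Fin n => stdGaussian d)| ≤ 1 := by
      have := norm_integral_le_of_norm_le_const
        (μ := Measure.pi fun _ : Fin n => stdGaussian d) (C := 1)
        (f := fun Y : Fin n → Fin d → ℝ => hebbTerm ε (μ.insertNth x Y) μ)
        (ae_of_all _ fun Y => (abs_hebbTerm ε hε _ _).le)
      simpa using this
    have h2 := (abs_le.1 h1).1
    have h3 := erf_le_one (Real.sqrt_nonneg (r / (2 * n)))
    simp only [Set.indicator_apply, Set.mem_ofPred_eq, hx, if_true, Pi.one_apply]
    linarith
  · simp only [Set.indicator_apply, Set.mem_ofPred_eq, hx, if_false, mul_zero, sub_zero]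
    push Not at hx
    refine le_trans (erf_mono ?_) (integral_hebbTerm_cond hn hd ε hε μ x (hr.trans_le hx))
    gcongr

lemma popRad_lower {n d : ℕ} (hn : 0 < n) (hd : 0 < d) (r : ℝ) (hr : 0 < r) :
    erf (Real.sqrt (r / (2 * n))) - 2 * (stdGaussian d).real {x | ∑ i, x i ^ 2 < r} ≤
      popRad (signClass d) (Measure.pi fun _ : Fin (n + 1) => stdGaussian d) := by
  rw [popRad_signClass_eq]
  set Q := Measure.pi fun _ : Fin (n + 1) => stdGaussian d
  set P := Measure.pi fun _ : Fin (n + 1) => radMeasure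
  have hiμ : ∀ μ, Integrable (fun p : (Fin (n + 1) → Fin d → ℝ) × (Fin (n + 1) → ℝ) =>
      hebbTerm p.2 p.1 μ) (Q.prod P) := fun μ =>
    Integrable.of_bound (measurable_hebbTerm μ).aestronglyMeasurable 1
      (ae_prod_signs.mono fun p hp => (abs_hebbTerm _ hp _ _).le)
  have hi : Integrable (fun p : (Fin (n + 1) → Fin d → ℝ) × (Fin (n + 1) → ℝ) =>
      ((n + 1 : ℕ) : ℝ)⁻¹ * ∑ μ, hebbTerm p.2 p.1 μ) (Q.prod P) :=
    (integrable_finsetSum _ fun μ _ => hiμ μ).const_mul _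
  have h1 : ∫ p, (((n + 1 : ℕ) : ℝ)⁻¹ * ∑ μ, hebbTerm p.2 p.1 μ) ∂(Q.prod P) ≤
      ∫ p : (Fin (n + 1) → Fin d → ℝ) × (Fin (n + 1) → ℝ),
        (⨆ f : signClass d, ((n + 1 : ℕ) : ℝ)⁻¹ * ∑ μ, p.2 μ * f.1 (p.1 μ)) ∂(Q.prod P) := by
    refine integral_mono hi (integrable_iSup_correlation (n + 1) d) fun p => ?_
    exact le_ciSup (bddAbove_correlation p.1 p.2)
      ⟨_, fun i => ∑ ν, p.2 ν * p.1 ν i, rfl⟩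
  refine le_trans ?_ h1
  rw [integral_const_mul, integral_finsetSum _ fun μ _ => hiμ μ, inv_mul_eq_div,
    le_div_iff₀ (by positivity)]
  set B := erf (Real.sqrt (r / (2 * n))) - 2 * (stdGaussian d).real {x | ∑ i, x i ^ 2 < r}
  have h2 : ∀ μ, B ≤ ∫ p : (Fin (n + 1) → Fin d → ℝ) × (Fin (n + 1) → ℝ),
      hebbTerm p.2 p.1 μ ∂(Q.prod P) := by
    intro μ
    rw [integral_prod_symm _ (hiμ μ)]
    have h3 : ∫ _ε, B ∂P = B := by simp
    rw [← h3]
    exact integral_mono_ae (integrable_const _) (hiμ μ).integral_prod_right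
      ((ae_pi_radMeasure (n + 1)).mono fun ε hε => integral_hebbTerm hn hd ε hε μ r hr)
  calc B * ((n + 1 : ℕ) : ℝ) = ∑ _μ : Fin (n + 1), B := by simp [mul_comm]
    _ ≤ _ := Finset.sum_le_sum fun μ _ => h2 μ

/-! ### Passage to the limit -/

/-- With `m_d = ⌈αd⌉` i.i.d. Gaussian sample columns,
`liminf_{d→∞} R_{m_d}(F_sign) ≥ erf(1/√(2α))`. -/
theorem liminf_popRad_signClass (α : ℝ) (hα : 0 < α) :
    erf (1 / Real.sqrt (2 * α)) ≤
      Filter.liminf (fun d : ℕ =>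
          popRad (signClass d)
            (Measure.pi fun _ : Fin ⌈α * d⌉₊ => stdGaussian d))
        Filter.atTop := by
  obtain ⟨C, hC, htail⟩ := norm_tail
  have key : ∀ δ : ℝ, 0 < δ → δ < 1 → erf (Real.sqrt ((1 - δ) / (2 * α))) ≤
      Filter.liminf (fun d : ℕ => popRad (signClass d)
        (Measure.pi fun _ : Fin ⌈α * d⌉₊ => stdGaussian d)) Filter.atTop := by
    intro δ hδ hδ1
    set E := erf (Real.sqrt ((1 - δ) / (2 * α)))
    have hlim : Tendsto (fun d : ℕ => E - 2 * (C / δ ^ 2 / d)) atTop (nhds E) := by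
      have := (tendsto_const_div_atTop_nhds_zero_nat (C / δ ^ 2)).const_mul 2
      simpa using this.const_sub E
    rw [← hlim.liminf_eq]
    refine liminf_le_liminf ?_ hlim.isBoundedUnder_ge
      (isCoboundedUnder_ge_of_le atTop (x := 1) fun d => popRad_signClass_le_one _ _)
    have hbig : ∀ᶠ d : ℕ in atTop, 1 < α * d :=
      (tendsto_natCast_atTop_atTop.const_mul_atTop hα).eventually_gt_atTop 1
    filter_upwards [hbig, eventually_gt_atTop 0] with d hd1 hd
    obtain ⟨n, hn⟩ : ∃ n, ⌈α * d⌉₊ = n + 1 :=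
      Nat.exists_eq_succ_of_ne_zero (Nat.ceil_pos.2 (by linarith)).ne'
    have hn0 : 0 < n := by
      have : 1 < ⌈α * d⌉₊ := Nat.lt_ceil.2 (by simpa using hd1)
      omega
    -- `n = ⌈α d⌉ - 1` lies strictly below `α d`, so the ratio `d / n` is at least `1 / α`.
    have hnα : (n : ℝ) < α * d := Nat.lt_ceil.1 (by omega)
    have hd' : (0 : ℝ) < d := by exact_mod_cast hd
    have hn' : (0 : ℝ) < n := by exact_mod_cast hn0
    have hδ' : 0 < 1 - δ := by linarith
    rw [hn]
    refine le_trans ?_ (popRad_lower hn0 hd ((1 - δ) * d) (by positivity))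
    have h1 := htail d δ hd hδ
    rw [← div_div] at h1
    have h2 : E ≤ erf (Real.sqrt ((1 - δ) * d / (2 * n))) := by
      refine erf_mono (Real.sqrt_le_sqrt ?_)
      rw [div_le_div_iff₀ (by positivity) (by positivity)]
      nlinarith
    linarith
  have hcont : Tendsto (fun δ : ℝ => erf (Real.sqrt ((1 - δ) / (2 * α))))
      (nhdsWithin 0 (Set.Ioi 0)) (nhds (erf (1 / Real.sqrt (2 * α)))) := by
    have hc : Continuous fun δ : ℝ => erf (Real.sqrt ((1 - δ) / (2 * α))) :=
      continuous_erf.comp (by fun_prop)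
    have := (hc.tendsto 0).mono_left (nhdsWithin_le_nhds (s := Set.Ioi 0))
    simpa [Real.sqrt_inv] using this
  refine le_of_tendsto hcont ?_
  filter_upwards [Ioo_mem_nhdsGT (zero_lt_one' ℝ)] with δ hδ
  exact key δ hδ.1 hδ.2
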